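/- Fix Δ^{ij} ∈ F⊗F for 0 ≤ i,j ≤ 1, each symmetric weak Frobenius, satisfying condition (A2): Δ^{00}_{12}·Δ^{11}_{23} = Δ^{01}_{12}·Δ^{10}_{23} in F^{⊗3}. Set S := Δ^{10} − Δ^{01} and β := Δ^{00} + Δ^{10}x₁ + Δ^{01}x₂ + Δ^{11}x₁x₂. Then: (i) in (F⊗F)[x₁,x₂], β² − σ(β)·β = (x₁ − x₂)·S·β (equivalently ∂^β(β) = S·β); (ii) in F^{⊗3}[x₁,x₂,x₃], with β_{pq} := Δ^{00}_{pq} + Δ^{10}_{pq}x_p + Δ^{01}_{pq}x_q + Δ^{11}_{pq}x_p x_q for p < q, and ρ_k (k = 1, 2) the unique 𝕜-linear operator with (x_k − x_{k+1})·ρ_k(a) = β_{k,k+1}·a − σ_k(a)·β_{k,k+1} (the right-hand side is always divisible by x_k − x_{k+1}), one has ρ₁(β_{13}) = ρ₂(β_{12}) + β_{13}·S_{23} = −σ₂(ρ₁(β_{23})), where S_{23} places S in tensor slots 2,3. -/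

import Mathlib

/-!
For `Δ^{ij}` symmetric weak Frobenius satisfying (A2), with `S = Δ¹⁰ − Δ⁰¹` and
`β = Δ⁰⁰ + Δ¹⁰x₁ + Δ⁰¹x₂ + Δ¹¹x₁x₂`:
(i) `∂^β(β) = S·β`,  and
(ii) `ρ₁(β₁₃) = ρ₂(β₁₂) + β₁₃·S₂₃ = −σ₂(ρ₁(β₂₃))` in `F^{⊗3}[x₁,x₂,x₃]`.
Polynomial rings over the (noncommutative) rings `F⊗F` and `F^{⊗3}` are modelled as
`(F⊗F) ⊗ 𝕜[x₁,x₂]` and `(F⊗(F⊗F)) ⊗ 𝕜[x₁,x₂,x₃]` respectively.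
-/

open scoped TensorProduct
open MvPolynomial

variable (k F : Type*)

/-- Weak Frobenius elements of `F ⊗ F`: `(a⊗b)·Δ = Δ·(b⊗a)` for all `a, b ∈ F`. -/
def IsWeakFrobenius [CommSemiring k] [Ring F] [Algebra k F] (Δ : F ⊗[k] F) : Prop :=
  ∀ a b : F, (a ⊗ₜ[k] b) * Δ = Δ * (b ⊗ₜ[k] a)

/-- Symmetric elements of `F ⊗ F`: fixed by the flip. -/
def IsSymmEl [CommSemiring k] [Ring F] [Algebra k F] (Δ : F ⊗[k] F) : Prop :=
  (Algebra.TensorProduct.comm k F F) Δ = Δ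

/-- The polynomial ring `(F⊗F)[x₁,x₂]`, modelled as `(F⊗F) ⊗ 𝕜[x₁,x₂]`. -/
abbrev PolyFF (k F : Type*) [CommSemiring k] [Ring F] [Algebra k F] :=
  (F ⊗[k] F) ⊗[k] MvPolynomial (Fin 2) k

/-- The automorphism `σ` of `(F⊗F)[x₁,x₂]`. -/
noncomputable def sigmaP [CommSemiring k] [Ring F] [Algebra k F] :
    PolyFF k F ≃ₐ[k] PolyFF k F :=
  Algebra.TensorProduct.congr (Algebra.TensorProduct.comm k F F)
    (MvPolynomial.renameEquiv k (Equiv.swap (0 : Fin 2) 1))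

/-- The triple tensor power `F^{⊗3}`. -/
abbrev T3 (k F : Type*) [CommSemiring k] [Ring F] [Algebra k F] := F ⊗[k] (F ⊗[k] F)

/-- The embedding `F⊗F → F^{⊗3}` placing the two legs in positions 1, 2. -/
noncomputable def emb12 [CommSemiring k] [Ring F] [Algebra k F] :
    F ⊗[k] F →ₗ[k] T3 k F :=
  LinearMap.lTensor F ((TensorProduct.mk k F F).flip 1)

/-- The embedding `F⊗F → F^{⊗3}` placing the two legs in positions 1, 3. -/
noncomputable def emb13 [CommSemiring k] [Ring F] [Algebra k F] :
    F ⊗[k] F →ₗ[k] T3 k F :=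
  LinearMap.lTensor F (TensorProduct.mk k F F 1)

/-- The embedding `F⊗F → F^{⊗3}` placing the two legs in positions 2, 3. -/
noncomputable def emb23 [CommSemiring k] [Ring F] [Algebra k F] :
    F ⊗[k] F →ₗ[k] T3 k F :=
  TensorProduct.mk k F (F ⊗[k] F) 1

/-- The polynomial ring `F^{⊗3}[x₁,x₂,x₃]`, modelled as `F^{⊗3} ⊗ 𝕜[x₁,x₂,x₃]`. -/
abbrev PolyT3 (k F : Type*) [CommSemiring k] [Ring F] [Algebra k F] :=
  T3 k F ⊗[k] MvPolynomial (Fin 3) k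

/-- The automorphism `σ₁` of `F^{⊗3}[x₁,x₂,x₃]`: swaps tensor slots 1, 2 and the
variables `x₁, x₂`. -/
noncomputable def sigma1 [CommSemiring k] [Ring F] [Algebra k F] :
    PolyT3 k F ≃ₐ[k] PolyT3 k F :=
  Algebra.TensorProduct.congr (Algebra.TensorProduct.leftComm k F F F)
    (MvPolynomial.renameEquiv k (Equiv.swap (0 : Fin 3) 1))

/-- The automorphism `σ₂` of `F^{⊗3}[x₁,x₂,x₃]`: swaps tensor slots 2, 3 and the
variables `x₂, x₃`. -/
noncomputable def sigma2 [CommSemiring k] [Ring F] [Algebra k F] :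
    PolyT3 k F ≃ₐ[k] PolyT3 k F :=
  Algebra.TensorProduct.congr
    (Algebra.TensorProduct.congr (AlgEquiv.refl (R := k) (A₁ := F))
      (Algebra.TensorProduct.comm k F F))
    (MvPolynomial.renameEquiv k (Equiv.swap (1 : Fin 3) 2))

/-- `β_{pq} ∈ F^{⊗3}[x₁,x₂,x₃]`: the element `β` placed in tensor slots `p, q` with
variables `x_p, x_q`, given the four coefficients of `β` and the corresponding
embedding `F⊗F → F^{⊗3}`. -/
noncomputable def betaPQ [CommSemiring k] [Ring F] [Algebra k F]
    (Δ00 Δ10 Δ01 Δ11 : F ⊗[k] F) (empq : F ⊗[k] F →ₗ[k] T3 k F) (p q : Fin 3) :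
    PolyT3 k F :=
  (empq Δ00) ⊗ₜ[k] (1 : MvPolynomial (Fin 3) k)
    + (empq Δ10) ⊗ₜ[k] (X p : MvPolynomial (Fin 3) k)
    + (empq Δ01) ⊗ₜ[k] (X q : MvPolynomial (Fin 3) k)
    + (empq Δ11) ⊗ₜ[k] ((X p : MvPolynomial (Fin 3) k) * X q)


section Helpers

variable {k F}

lemma aux_emb12_tmul [CommSemiring k] [Ring F] [Algebra k F] (a b : F) :
    emb12 k F (a ⊗ₜ[k] b) = a ⊗ₜ[k] (b ⊗ₜ[k] (1 : F)) := by
  simp [emb12]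

lemma aux_emb13_tmul [CommSemiring k] [Ring F] [Algebra k F] (a b : F) :
    emb13 k F (a ⊗ₜ[k] b) = a ⊗ₜ[k] ((1 : F) ⊗ₜ[k] b) := by
  simp [emb13]

lemma aux_emb23_apply [CommSemiring k] [Ring F] [Algebra k F] (A : F ⊗[k] F) :
    emb23 k F A = (1 : F) ⊗ₜ[k] A := by
  simp [emb23]

lemma aux_L12 [CommSemiring k] [Ring F] [Algebra k F] (a b c : F) (A : F ⊗[k] F) :
    (a ⊗ₜ[k] (b ⊗ₜ[k] c)) * emb12 k F A =
      emb12 k F ((a ⊗ₜ[k] b) * A) * ((1 : F) ⊗ₜ[k] ((1 : F) ⊗ₜ[k] c)) := by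
  induction A using TensorProduct.induction_on with
  | zero => simp
  | tmul x y => simp [aux_emb12_tmul]
  | add x y hx hy => simp only [mul_add, map_add, add_mul, hx, hy]

lemma aux_R12 [CommSemiring k] [Ring F] [Algebra k F] (a b c : F) (A : F ⊗[k] F) :
    emb12 k F A * (a ⊗ₜ[k] (b ⊗ₜ[k] c)) =
      emb12 k F (A * (a ⊗ₜ[k] b)) * ((1 : F) ⊗ₜ[k] ((1 : F) ⊗ₜ[k] c)) := by
  induction A using TensorProduct.induction_on with
  | zero => simp
  | tmul x y => simp [aux_emb12_tmul]
  | add x y hx hy => simp only [mul_add, map_add, add_mul, hx, hy]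

lemma aux_L13 [CommSemiring k] [Ring F] [Algebra k F] (a b c : F) (A : F ⊗[k] F) :
    (a ⊗ₜ[k] (b ⊗ₜ[k] c)) * emb13 k F A =
      emb13 k F ((a ⊗ₜ[k] c) * A) * ((1 : F) ⊗ₜ[k] (b ⊗ₜ[k] (1 : F))) := by
  induction A using TensorProduct.induction_on with
  | zero => simp
  | tmul x y => simp [aux_emb13_tmul]
  | add x y hx hy => simp only [mul_add, map_add, add_mul, hx, hy]

lemma aux_R13 [CommSemiring k] [Ring F] [Algebra k F] (a b c : F) (A : F ⊗[k] F) :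
    emb13 k F A * (a ⊗ₜ[k] (b ⊗ₜ[k] c)) =
      emb13 k F (A * (a ⊗ₜ[k] c)) * ((1 : F) ⊗ₜ[k] (b ⊗ₜ[k] (1 : F))) := by
  induction A using TensorProduct.induction_on with
  | zero => simp
  | tmul x y => simp [aux_emb13_tmul]
  | add x y hx hy => simp only [mul_add, map_add, add_mul, hx, hy]

/-- `B₂₃ A₁₂ = A₁₂ B₁₃`. -/
lemma aux_rel1 [CommSemiring k] [Ring F] [Algebra k F] {A : F ⊗[k] F}
    (hA : IsWeakFrobenius k F A) (B : F ⊗[k] F) :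
    emb23 k F B * emb12 k F A = emb12 k F A * emb13 k F B := by
  induction B using TensorProduct.induction_on with
  | zero => simp
  | tmul x y => rw [aux_emb23_apply, aux_emb13_tmul, aux_L12, aux_R12 x, hA]
  | add x y hx hy => simp only [mul_add, map_add, add_mul, hx, hy]

/-- `A₁₂ B₂₃ = B₁₃ A₁₂`. -/
lemma aux_rel3 [CommSemiring k] [Ring F] [Algebra k F] {A : F ⊗[k] F}
    (hA : IsWeakFrobenius k F A) (B : F ⊗[k] F) :
    emb12 k F A * emb23 k F B = emb13 k F B * emb12 k F A := by
  induction B using TensorProduct.induction_on with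
  | zero => simp
  | tmul x y => rw [aux_emb23_apply, aux_emb13_tmul, aux_L12, aux_R12, hA]
  | add x y hx hy => simp only [mul_add, map_add, add_mul, hx, hy]

/-- `A₁₃ B₂₃ = B₂₃ A₁₂`. -/
lemma aux_rel2 [CommSemiring k] [Ring F] [Algebra k F] {B : F ⊗[k] F}
    (hB : IsWeakFrobenius k F B) (A : F ⊗[k] F) :
    emb13 k F A * emb23 k F B = emb23 k F B * emb12 k F A := by
  induction A using TensorProduct.induction_on with
  | zero => simp
  | tmul x y =>
    rw [aux_emb23_apply, aux_emb13_tmul, aux_emb12_tmul, Algebra.TensorProduct.tmul_mul_tmul,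
      Algebra.TensorProduct.tmul_mul_tmul, hB, one_mul, mul_one]
  | add x y hx hy => simp only [mul_add, map_add, add_mul, hx, hy]

lemma aux_rel4 [CommSemiring k] [Ring F] [Algebra k F] {B : F ⊗[k] F}
    (hB : IsWeakFrobenius k F B) (A : F ⊗[k] F) :
    emb12 k F A * emb13 k F B =
      emb13 k F B * emb23 k F (Algebra.TensorProduct.comm k F F A) := by
  induction A using TensorProduct.induction_on with
  | zero => simp
  | tmul x y =>
    rw [aux_emb12_tmul, Algebra.TensorProduct.comm_tmul, aux_emb23_apply, aux_L13, aux_R13 1 y x, hB]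
  | add x y hx hy => simp only [mul_add, map_add, add_mul, hx, hy]

/-- `A₁₂ B₁₃ = B₁₂ A₁₃`. -/
lemma aux_symm [CommSemiring k] [Ring F] [Algebra k F] {A B : F ⊗[k] F}
    (hA : IsWeakFrobenius k F A) (hsA : IsSymmEl k F A) (hB : IsWeakFrobenius k F B) :
    emb12 k F A * emb13 k F B = emb12 k F B * emb13 k F A := by
  rw [aux_rel4 hB, hsA, aux_rel2 hA, aux_rel1 hB]

noncomputable abbrev auxTau (k F : Type*) [CommSemiring k] [Ring F] [Algebra k F] :
    T3 k F ≃ₐ[k] T3 k F :=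
  Algebra.TensorProduct.congr (AlgEquiv.refl (R := k) (A₁ := F))
      (Algebra.TensorProduct.comm k F F)

lemma auxTau12 [CommSemiring k] [Ring F] [Algebra k F] (A : F ⊗[k] F) :
    auxTau k F (emb12 k F A) = emb13 k F A := by
  induction A using TensorProduct.induction_on with
  | zero => simp
  | tmul x y => simp [aux_emb12_tmul, aux_emb13_tmul]
  | add x y hx hy => simp only [map_add, hx, hy]

lemma auxTau13 [CommSemiring k] [Ring F] [Algebra k F] (A : F ⊗[k] F) :
    auxTau k F (emb13 k F A) = emb12 k F A := by
  induction A using TensorProduct.induction_on with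
  | zero => simp
  | tmul x y => simp [aux_emb12_tmul, aux_emb13_tmul]
  | add x y hx hy => simp only [map_add, hx, hy]

lemma auxLc13 [CommSemiring k] [Ring F] [Algebra k F] (A : F ⊗[k] F) :
    Algebra.TensorProduct.leftComm k F F F (emb13 k F A) = emb23 k F A := by
  induction A using TensorProduct.induction_on with
  | zero => simp
  | tmul x y => simp [aux_emb23_apply, aux_emb13_tmul]
  | add x y hx hy => simp only [map_add, hx, hy]

lemma auxLc23 [CommSemiring k] [Ring F] [Algebra k F] (A : F ⊗[k] F) :
    Algebra.TensorProduct.leftComm k F F F (emb23 k F A) = emb13 k F A := by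
  induction A using TensorProduct.induction_on with
  | zero => simp
  | tmul x y => simp [aux_emb23_apply, aux_emb13_tmul]
  | add x y hx hy => simp only [map_add, hx, hy]

lemma aux_A2 [CommSemiring k] [Ring F] [Algebra k F] {A B C D : F ⊗[k] F}
    (hA : IsWeakFrobenius k F A) (hC : IsWeakFrobenius k F C)
    (h : emb12 k F A * emb23 k F B = emb12 k F C * emb23 k F D) :
    emb12 k F B * emb13 k F A = emb12 k F D * emb13 k F C := by
  rw [aux_rel3 hA, aux_rel3 hC] at h
  have h2 := congrArg (auxTau k F) h
  simpa only [map_mul, auxTau12, auxTau13] using h2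

lemma aux_cancel [Field k] {R C : Type*} [Ring R] [Algebra k R] [CommRing C] [IsDomain C]
    [Algebra k C] {p : C} (hp : p ≠ 0) {y z : R ⊗[k] C}
    (h : ((1 : R) ⊗ₜ[k] p) * y = ((1 : R) ⊗ₜ[k] p) * z) : y = z := by
  have hinj : Function.Injective (LinearMap.mulLeft k p) := by
    intro a b hab
    exact mul_left_cancel₀ hp hab
  have h2 := Module.Flat.lTensor_preserves_injective_linearMap (M := R) _ hinj
  have h3 : ∀ w : R ⊗[k] C, (LinearMap.mulLeft k p).lTensor R w = ((1 : R) ⊗ₜ[k] p) * w := by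
    intro w
    induction w using TensorProduct.induction_on with
    | zero => simp
    | tmul x y => simp
    | add x y hx hy => simp only [map_add, mul_add, hx, hy]
  apply h2
  rw [h3, h3, h]

section
attribute [local instance] Algebra.TensorProduct.rightAlgebra

/-- The inclusion of coefficients. -/
noncomputable def auxI (k : Type*) [CommSemiring k] {R : Type*} (C : Type*) [Ring R] [Algebra k R]
    [CommRing C] [Algebra k C] (a : R) : R ⊗[k] C := a ⊗ₜ[k] (1 : C)

lemma aux_smul [CommSemiring k] {R C : Type*} [Ring R] [Algebra k R] [CommRing C]
    [Algebra k C] (a : R) (m : C) :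
    a ⊗ₜ[k] m = m • auxI k C a := by
  unfold auxI
  rw [Algebra.smul_def, Algebra.TensorProduct.right_algebraMap_apply]
  simp

end

section Generic

/-- Generic version of `betaPQ`. -/
noncomputable def gb (k : Type*) [CommSemiring k] {R C : Type*} [Ring R] [Algebra k R]
    [CommRing C] [Algebra k C] (a : Fin 4 → R) (x y : C) : R ⊗[k] C :=
  a 0 ⊗ₜ[k] (1 : C) + a 1 ⊗ₜ[k] x + a 2 ⊗ₜ[k] y + a 3 ⊗ₜ[k] (x * y)

variable [Field k] {R C : Type*} [Ring R] [Algebra k R] [CommRing C] [Algebra k C]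
  {a b c : Fin 4 → R} (x y z : C)

attribute [local instance] Algebra.TensorProduct.rightAlgebra

lemma gen1 (h1 : ∀ i j, c i * a j = a j * b i) :
    gb k a x y * gb k b x z - gb k c y z * gb k a x y =
      ((1 : R) ⊗ₜ[k] (x - y)) * (gb k a x y * (b 1 ⊗ₜ[k] (1 : C) + b 3 ⊗ₜ[k] z)) := by
  simp only [gb, add_mul, mul_add, Algebra.TensorProduct.tmul_mul_tmul, h1, one_mul]
  simp only [aux_smul]
  module

lemma gen2 (h2 : ∀ i j, b i * c j = c j * a i) :
    gb k c y z * gb k a x y - gb k b x z * gb k c y z =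
      ((1 : R) ⊗ₜ[k] (y - z)) * (gb k c y z * (a 2 ⊗ₜ[k] (1 : C) + a 3 ⊗ₜ[k] x)) := by
  simp only [gb, add_mul, mul_add, Algebra.TensorProduct.tmul_mul_tmul, h2, one_mul]
  simp only [aux_smul]
  module

lemma gen3 (h3 : ∀ i j, a i * c j = b j * a i) :
    gb k a x y * gb k c y z - gb k b x z * gb k a x y =
      ((1 : R) ⊗ₜ[k] (x - y)) * (-((b 1 ⊗ₜ[k] (1 : C) + b 3 ⊗ₜ[k] z) * gb k a x y)) := by
  simp only [gb, add_mul, mul_add, mul_neg, Algebra.TensorProduct.tmul_mul_tmul, h3, one_mul]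
  simp only [aux_smul]
  module

lemma gen4 (h1 : ∀ i j, c i * a j = a j * b i) (h2 : ∀ i j, b i * c j = c j * a i)
    (hs : ∀ i j, a i * b j = a j * b i) (hA : a 3 * b 0 = a 1 * b 2) :
    gb k a x y * (b 1 ⊗ₜ[k] (1 : C) + b 3 ⊗ₜ[k] z) =
      gb k c y z * (a 2 ⊗ₜ[k] (1 : C) + a 3 ⊗ₜ[k] x)
        + gb k b x z * ((c 1 - c 2) ⊗ₜ[k] (1 : C)) := by
  simp only [gb, add_mul, mul_add, mul_sub, Algebra.TensorProduct.tmul_mul_tmul, h2, h1,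
    TensorProduct.sub_tmul, one_mul]
  simp only [hs 0 1, hs 0 2, hs 0 3, hs 2 1, hs 3 1, hs 3 2, hA]
  simp only [aux_smul]
  module

lemma gen5 (hs : ∀ i j, a i * b j = a j * b i) (hA : a 3 * b 0 = a 1 * b 2) :
    gb k a x y * (b 1 ⊗ₜ[k] (1 : C) + b 3 ⊗ₜ[k] z) =
      (a 1 ⊗ₜ[k] (1 : C) + a 3 ⊗ₜ[k] y) * gb k b x z := by
  simp only [gb, add_mul, mul_add, Algebra.TensorProduct.tmul_mul_tmul, one_mul]
  simp only [hs 0 1, hs 0 2, hs 0 3, hs 2 1, hs 3 1, hs 3 2, hA]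
  simp only [aux_smul]
  module

lemma gen6 (x y : C) : gb k a x y * gb k a x y - gb k a y x * gb k a x y =
    ((1 : R) ⊗ₜ[k] (x - y)) * ((a 1 - a 2) ⊗ₜ[k] (1 : C)) * gb k a x y := by
  rw [← sub_mul]
  congr 1
  simp only [gb, Algebra.TensorProduct.tmul_mul_tmul, TensorProduct.sub_tmul, mul_sub, one_mul, mul_one]
  simp only [aux_smul]
  module

lemma gen7 (f : R ⊗[k] C ≃ₐ[k] R ⊗[k] C) (u v : R ⊗[k] C) : -f (-(u * v)) = f u * f v := by
  rw [map_neg, neg_neg, map_mul]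

end Generic

lemma betaPQ_eq [Field k] [Ring F] [Algebra k F] (D : Fin 4 → F ⊗[k] F)
    (e : F ⊗[k] F →ₗ[k] T3 k F) (p q : Fin 3) :
    betaPQ k F (D 0) (D 1) (D 2) (D 3) e p q =
      gb k (fun i => e (D i)) (X p : MvPolynomial (Fin 3) k) (X q) := rfl

section Sigma

variable [CommSemiring k] [Ring F] [Algebra k F] (D : Fin 4 → F ⊗[k] F)

lemma sig1_13 : sigma1 k F (betaPQ k F (D 0) (D 1) (D 2) (D 3) (emb13 k F) 0 2) =
    betaPQ k F (D 0) (D 1) (D 2) (D 3) (emb23 k F) 1 2 := by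
  have sw01 : Equiv.swap (0 : Fin 3) 1 2 = 2 := by decide
  simp only [betaPQ, sigma1, map_add, Algebra.TensorProduct.congr_apply,
      Algebra.TensorProduct.map_tmul, AlgEquiv.coe_toAlgHom, auxLc13, map_one, map_mul,
      MvPolynomial.renameEquiv_apply, MvPolynomial.rename_X, Equiv.swap_apply_left, sw01]

lemma sig1_23 : sigma1 k F (betaPQ k F (D 0) (D 1) (D 2) (D 3) (emb23 k F) 1 2) =
    betaPQ k F (D 0) (D 1) (D 2) (D 3) (emb13 k F) 0 2 := by
  have sw01 : Equiv.swap (0 : Fin 3) 1 2 = 2 := by decide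
  simp only [betaPQ, sigma1, map_add, Algebra.TensorProduct.congr_apply,
      Algebra.TensorProduct.map_tmul, AlgEquiv.coe_toAlgHom, auxLc23, map_one, map_mul,
      MvPolynomial.renameEquiv_apply, MvPolynomial.rename_X, Equiv.swap_apply_right, sw01]

lemma sigma2_tmul (t : T3 k F) (m : MvPolynomial (Fin 3) k) :
    sigma2 k F (t ⊗ₜ[k] m) =
      (auxTau k F t) ⊗ₜ[k] (MvPolynomial.rename (Equiv.swap (1 : Fin 3) 2) m) := rfl

lemma sig2_12 : sigma2 k F (betaPQ k F (D 0) (D 1) (D 2) (D 3) (emb12 k F) 0 1) =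
    betaPQ k F (D 0) (D 1) (D 2) (D 3) (emb13 k F) 0 2 := by
  have sw12 : Equiv.swap (1 : Fin 3) 2 0 = 0 := by decide
  simp only [betaPQ, map_add, sigma2_tmul, auxTau12, map_one, map_mul,
      MvPolynomial.rename_X, Equiv.swap_apply_left, sw12]

lemma sig2_lin : sigma2 k F (emb13 k F (D 1) ⊗ₜ[k] 1 + emb13 k F (D 3) ⊗ₜ[k] X 2) =
    emb12 k F (D 1) ⊗ₜ[k] 1 + emb12 k F (D 3) ⊗ₜ[k] X 1 := by
  simp only [map_add, sigma2_tmul, auxTau13, map_one,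
      MvPolynomial.rename_X, Equiv.swap_apply_right]

end Sigma

end Helpers

set_option maxHeartbeats 1000000 in
theorem stmt12 [Field k] [Ring F] [Algebra k F] [FiniteDimensional k F]
    (Δ00 Δ10 Δ01 Δ11 : F ⊗[k] F)
    (hwf00 : IsWeakFrobenius k F Δ00) (hsym00 : IsSymmEl k F Δ00)
    (hwf10 : IsWeakFrobenius k F Δ10) (hsym10 : IsSymmEl k F Δ10)
    (hwf01 : IsWeakFrobenius k F Δ01) (hsym01 : IsSymmEl k F Δ01)
    (hwf11 : IsWeakFrobenius k F Δ11) (hsym11 : IsSymmEl k F Δ11)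
    -- condition (A2): `Δ^{00}_{12}·Δ^{11}_{23} = Δ^{01}_{12}·Δ^{10}_{23}` in `F^{⊗3}`
    (hA2 : emb12 k F Δ00 * emb23 k F Δ11 = emb12 k F Δ01 * emb23 k F Δ10)
    -- `S = Δ¹⁰ − Δ⁰¹` and `β = Δ⁰⁰ + Δ¹⁰x₁ + Δ⁰¹x₂ + Δ¹¹x₁x₂`
    (Sel : F ⊗[k] F) (hS : Sel = Δ10 - Δ01)
    (β : PolyFF k F)
    (hβ : β = Δ00 ⊗ₜ[k] (1 : MvPolynomial (Fin 2) k)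
        + Δ10 ⊗ₜ[k] (X (0 : Fin 2) : MvPolynomial (Fin 2) k)
        + Δ01 ⊗ₜ[k] (X (1 : Fin 2) : MvPolynomial (Fin 2) k)
        + Δ11 ⊗ₜ[k] ((X (0 : Fin 2) : MvPolynomial (Fin 2) k) * X 1))
    -- `ρ₁, ρ₂`: the twisted Demazure operators on `F^{⊗3}[x₁,x₂,x₃]`
    (ρ1 ρ2 : PolyT3 k F →ₗ[k] PolyT3 k F)
    (hρ1 : ∀ a : PolyT3 k F,
      ((1 : T3 k F) ⊗ₜ[k] ((X (0 : Fin 3) : MvPolynomial (Fin 3) k) - X 1)) * ρ1 a =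
        betaPQ k F Δ00 Δ10 Δ01 Δ11 (emb12 k F) 0 1 * a
          - (sigma1 k F) a * betaPQ k F Δ00 Δ10 Δ01 Δ11 (emb12 k F) 0 1)
    (hρ2 : ∀ a : PolyT3 k F,
      ((1 : T3 k F) ⊗ₜ[k] ((X (1 : Fin 3) : MvPolynomial (Fin 3) k) - X 2)) * ρ2 a =
        betaPQ k F Δ00 Δ10 Δ01 Δ11 (emb23 k F) 1 2 * a
          - (sigma2 k F) a * betaPQ k F Δ00 Δ10 Δ01 Δ11 (emb23 k F) 1 2) :
    -- (i) `β² − σ(β)·β = (x₁ − x₂)·S·β` in `(F⊗F)[x₁,x₂]`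
    (β * β - (sigmaP k F) β * β =
      ((1 : F ⊗[k] F) ⊗ₜ[k]
          ((X (0 : Fin 2) : MvPolynomial (Fin 2) k) - X 1))
        * (Sel ⊗ₜ[k] (1 : MvPolynomial (Fin 2) k)) * β) ∧
    -- (ii) `ρ₁(β₁₃) = ρ₂(β₁₂) + β₁₃·S₂₃ = −σ₂(ρ₁(β₂₃))` in `F^{⊗3}[x₁,x₂,x₃]`
    (ρ1 (betaPQ k F Δ00 Δ10 Δ01 Δ11 (emb13 k F) 0 2) =
        ρ2 (betaPQ k F Δ00 Δ10 Δ01 Δ11 (emb12 k F) 0 1)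
          + betaPQ k F Δ00 Δ10 Δ01 Δ11 (emb13 k F) 0 2
              * ((emb23 k F Sel) ⊗ₜ[k] (1 : MvPolynomial (Fin 3) k)) ∧
      ρ1 (betaPQ k F Δ00 Δ10 Δ01 Δ11 (emb13 k F) 0 2) =
        - (sigma2 k F) (ρ1 (betaPQ k F Δ00 Δ10 Δ01 Δ11 (emb23 k F) 1 2))) := by
  subst hS hβ
  have hX01 : (X (0 : Fin 3) : MvPolynomial (Fin 3) k) - X 1 ≠ 0 :=
    sub_ne_zero.mpr (fun h => by simpa using MvPolynomial.X_injective h)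
  have hX12 : (X (1 : Fin 3) : MvPolynomial (Fin 3) k) - X 2 ≠ 0 :=
    sub_ne_zero.mpr (fun h => by simpa using MvPolynomial.X_injective h)
  have hA2' := aux_A2 hwf00 hwf01 hA2
  obtain ⟨D, h0, h1, h2, h3⟩ : ∃ D : Fin 4 → F ⊗[k] F,
      D 0 = Δ00 ∧ D 1 = Δ10 ∧ D 2 = Δ01 ∧ D 3 = Δ11 :=
    ⟨![Δ00, Δ10, Δ01, Δ11], rfl, rfl, rfl, rfl⟩
  subst h0 h1 h2 h3
  have hwf : ∀ i, IsWeakFrobenius k F (D i) := by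
    intro i
    fin_cases i <;> assumption
  have hsym : ∀ i, IsSymmEl k F (D i) := by
    intro i
    fin_cases i <;> assumption
  have r1 : ∀ i j, emb23 k F (D i) * emb12 k F (D j) = emb12 k F (D j) * emb13 k F (D i) :=
    fun i j => aux_rel1 (hwf j) (D i)
  have r2 : ∀ i j, emb13 k F (D i) * emb23 k F (D j) = emb23 k F (D j) * emb12 k F (D i) :=
    fun i j => aux_rel2 (hwf j) (D i)
  have r3 : ∀ i j, emb12 k F (D i) * emb23 k F (D j) = emb13 k F (D j) * emb12 k F (D i) :=
    fun i j => aux_rel3 (hwf i) (D j)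
  have rs : ∀ i j, emb12 k F (D i) * emb13 k F (D j) = emb12 k F (D j) * emb13 k F (D i) :=
    fun i j => aux_symm (hwf i) (hsym i) (hwf j)
  have e1 : ρ1 (betaPQ k F (D 0) (D 1) (D 2) (D 3) (emb13 k F) 0 2) =
      betaPQ k F (D 0) (D 1) (D 2) (D 3) (emb12 k F) 0 1 *
        (emb13 k F (D 1) ⊗ₜ[k] 1 + emb13 k F (D 3) ⊗ₜ[k] X 2) := by
    apply aux_cancel hX01
    rw [hρ1, sig1_13]
    simp only [betaPQ_eq]
    exact gen1 (k := k) (R := T3 k F) (C := MvPolynomial (Fin 3) k)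
      (a := fun i => emb12 k F (D i)) (b := fun i => emb13 k F (D i)) 
      (c := fun i => emb23 k F (D i)) (X 0) (X 1) (X 2) r1
  have e2 : ρ2 (betaPQ k F (D 0) (D 1) (D 2) (D 3) (emb12 k F) 0 1) =
      betaPQ k F (D 0) (D 1) (D 2) (D 3) (emb23 k F) 1 2 *
        (emb12 k F (D 2) ⊗ₜ[k] 1 + emb12 k F (D 3) ⊗ₜ[k] X 0) := by
    apply aux_cancel hX12
    rw [hρ2, sig2_12]
    simp only [betaPQ_eq]
    exact gen2 (k := k) (R := T3 k F) (C := MvPolynomial (Fin 3) k)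
      (a := fun i => emb12 k F (D i)) (b := fun i => emb13 k F (D i)) 
      (c := fun i => emb23 k F (D i)) (X 0) (X 1) (X 2) r2
  have e3 : ρ1 (betaPQ k F (D 0) (D 1) (D 2) (D 3) (emb23 k F) 1 2) =
      - ((emb13 k F (D 1) ⊗ₜ[k] 1 + emb13 k F (D 3) ⊗ₜ[k] X 2) *
        betaPQ k F (D 0) (D 1) (D 2) (D 3) (emb12 k F) 0 1) := by
    apply aux_cancel hX01
    rw [hρ1, sig1_23]
    simp only [betaPQ_eq]
    exact gen3 (k := k) (R := T3 k F) (C := MvPolynomial (Fin 3) k)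
      (a := fun i => emb12 k F (D i)) (b := fun i => emb13 k F (D i)) 
      (c := fun i => emb23 k F (D i)) (X 0) (X 1) (X 2) r3
  refine ⟨?_, ?_, ?_⟩
  · have hσ : sigmaP k F (gb k D (X 0) (X 1)) = gb k D (X 1) (X 0) := by
      simp only [gb, sigmaP, map_add, Algebra.TensorProduct.congr_apply,
        Algebra.TensorProduct.map_tmul, AlgEquiv.coe_toAlgHom, map_one, map_mul,
        MvPolynomial.renameEquiv_apply, MvPolynomial.rename_X, Equiv.swap_apply_left,
        Equiv.swap_apply_right]
      rw [hsym 0, hsym 1, hsym 2, hsym 3]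
    have := gen6 (k := k) (a := D) (X (0 : Fin 2) : MvPolynomial (Fin 2) k) (X 1)
    rw [← hσ] at this
    exact this
  · rw [e1, e2, map_sub]
    simp only [betaPQ_eq]
    exact gen4 (k := k) (R := T3 k F) (C := MvPolynomial (Fin 3) k)
      (a := fun i => emb12 k F (D i)) (b := fun i => emb13 k F (D i)) 
      (c := fun i => emb23 k F (D i)) (X 0) (X 1) (X 2) r1 r2 rs hA2'
  · rw [e1, e3]
    refine Eq.trans ?_ (gen7 (k := k) (R := T3 k F) (C := MvPolynomial (Fin 3) k)
      (sigma2 k F) _ _).symm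
    rw [sig2_12, sig2_lin]
    simp only [betaPQ_eq]
    exact gen5 (k := k) (R := T3 k F) (C := MvPolynomial (Fin 3) k)
      (a := fun i => emb12 k F (D i)) (b := fun i => emb13 k F (D i)) 
      (X 0) (X 1) (X 2) rs hA2'
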